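/- arXiv:2304.10795 — 2 statements merged into one kernel-verified Lean document; each statement's English description precedes it below -/
import Mathlib

section
/- If Ŝ is a Neumann subgroup of M̂ = PGL(2,ℤ) not contained in M = PSL(2,ℤ) and Ŝ has (k,l,m)-structure for k, l, m ∈ ℕ ∪ {∞}, then k + l + m = ∞ and m ≥ 1. -/
open Matrix Pointwise

noncomputable section

abbrev GL2Z := Matrix.GeneralLinearGroup (Fin 2) ℤ

/-- The subgroup {±I} of GL(2,ℤ), which is its center. -/
def pmI : Subgroup GL2Z := Subgroup.zpowers (-1)

instance pmI_normal : pmI.Normal := by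
  constructor
  rintro n hn g
  obtain ⟨k, hk⟩ := Subgroup.mem_zpowers_iff.mp hn
  have hc : Commute ((-1 : GL2Z) ^ k) g := (Commute.neg_one_left g).zpow_left k
  have : g * n * g⁻¹ = n := by
    rw [← hk, ← hc.eq]; group
  rw [this]; exact hn

/-- The extended modular group PGL(2,ℤ) = GL(2,ℤ)/{±I}. -/
abbrev Mhat := GL2Z ⧸ pmI

def pr : GL2Z →* Mhat := QuotientGroup.mk' pmI

def tauGL : GL2Z := ⟨!![1,1;0,1], !![1,-1;0,1], by decide, by decide⟩
def nuGL : GL2Z := ⟨!![-1,0;0,1], !![-1,0;0,1], by decide, by decide⟩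
def omegaGL : GL2Z := ⟨!![0,-1;1,0], !![0,1;-1,0], by decide, by decide⟩
def phiGL : GL2Z := ⟨!![0,-1;1,1], !![1,1;-1,0], by decide, by decide⟩

/-- τ, the class of [[1,1],[0,1]]. -/
def tau : Mhat := pr tauGL
/-- ν, the class of [[-1,0],[0,1]]. -/
def nu : Mhat := pr nuGL
/-- ω, the class of [[0,-1],[1,0]]. -/
def omega : Mhat := pr omegaGL
/-- φ, the class of [[0,-1],[1,1]]. -/
def phi : Mhat := pr phiGL

/-- T̂ = ⟨τ, ν⟩, the stabilizer of ∞. -/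
def That : Subgroup Mhat := Subgroup.closure {tau, nu}

/-- A Neumann subgroup of the extended modular group: a complement of T̂. -/
def IsNeumann (S : Subgroup Mhat) : Prop :=
  (S : Set Mhat) * (That : Set Mhat) = Set.univ ∧ S ⊓ That = ⊥

/-- The modular group PSL(2,ℤ), as the subgroup of PGL(2,ℤ) of classes of
matrices of determinant one. -/
def Msub : Subgroup Mhat :=
  Subgroup.map pr (MonoidHom.ker (Matrix.GeneralLinearGroup.det))

/-- `G` is a free product of `k` groups of order 2, `l` groups of order 3 and
`m` infinite cyclic groups (cardinalities measured in `ℕ∞`). -/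
def HasKLMStructure (G : Type) [Group G] (k l m : ℕ∞) : Prop :=
  ∃ (ι : Type) (H : ι → Type) (inst : ∀ i, Group (H i)),
    letI := inst
    Nonempty (G ≃* Monoid.CoprodI H) ∧
    (∀ i, Nonempty (H i ≃* Multiplicative (ZMod 2)) ∨
      Nonempty (H i ≃* Multiplicative (ZMod 3)) ∨
      Nonempty (H i ≃* Multiplicative ℤ)) ∧
    {i | Nonempty (H i ≃* Multiplicative (ZMod 2))}.encard = k ∧
    {i | Nonempty (H i ≃* Multiplicative (ZMod 3))}.encard = l ∧
    {i | Nonempty (H i ≃* Multiplicative ℤ)}.encard = m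

/-!
A Neumann subgroup `S` acts simply transitively on the cusps `ℚ ∪ {∞}`, since `That` is the
stabilizer of `∞`.

The edge from `∞` to `0` cuts the Farey tessellation into two halves. For a fixed `t`, all but
finitely many `g` move this edge and its image under `t` into the same half, so the elements moving
the edge into the right half form an almost invariant subset of `Mhat`. Every coset of `S` contains
elements moving `∞` to `1` and elements moving `∞` to `-1`, hence meets this subset and its
complement. For a finitely generated `S` this forces finite index; but the index of `S` is the order
of `That`, which is infinite. So `S` is not finitely generated.

An integral `2 × 2` matrix of determinant `-1` never squares to `-1`, so a class of order `2`
outside `Msub` is represented by an involution; this has eigenvalue `1`, hence fixes a cusp and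
cannot lie in `S`. Classes of order `3` have determinant `1`. Therefore `S` is contained in `Msub`
if it is a free product of groups of orders `2` and `3`.
-/

lemma eq_one_of_inv_mul_mul_mem_of_isComplement' {G : Type*} [Group G] {H K : Subgroup G}
    (hHK : H.IsComplement' K) {h g : G} (hh : h ∈ H) (hg : g ∈ H) (hconj : g⁻¹ * h * g ∈ K) :
    h = 1 := by
  have hmem : g⁻¹ * h * g ∈ H := H.mul_mem (H.mul_mem (H.inv_mem hg) hh) hg
  have hone := Subgroup.disjoint_def.mp hHK.disjoint hmem hconj
  simpa [mul_assoc, inv_mul_eq_one, eq_comm] using hone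

section AlmostInvariant

variable {G : Type*} [Group G]

/-- `P` is almost invariant (in the sense of the theory of ends of groups): each right translation
moves only finitely many elements of `P` out of `P`. Asking this of `t` and of `t⁻¹` makes all the
symmetric differences of `P` with its right translates finite. -/
def IsAlmostInvariant (P : Set G) : Prop :=
  ∀ t : G, {x ∈ P | x * t ∉ P}.Finite

lemma exists_mem_mul_notMem_of_mem_closure {B P : Set G} {s : G} (hs : s ∈ Submonoid.closure B) :
    ∀ x ∈ P, x * s ∉ P → ∃ r ∈ Submonoid.closure B, ∃ b ∈ B, x * r ∈ P ∧ x * r * b ∉ P := by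
  induction hs using Submonoid.closure_induction with
  | mem b hb => exact fun x hx hxb ↦ ⟨1, one_mem _, b, hb, by simpa using hx, by simpa using hxb⟩
  | one => exact fun x hx hx1 ↦ absurd hx (by simpa using hx1)
  | mul s t hs _ ihs iht =>
    intro x hx hxst
    by_cases hxs : x * s ∈ P
    · obtain ⟨r, hr, b, hb, hin, hout⟩ := iht (x * s) hxs (by rwa [mul_assoc])
      exact ⟨s * r, mul_mem hs hr, b, hb, by rwa [← mul_assoc], by rwa [← mul_assoc]⟩
    · exact ihs x hx hxs

/-- A coset meeting both `P` and its complement contains a point where multiplication by one of the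
finitely many generators leaves `P`, and there are only finitely many such points. -/
theorem IsAlmostInvariant.finite_quotient {P : Set G} (hP : IsAlmostInvariant P) {S : Subgroup G}
    (hS : S.FG) (hmeets : ∀ x : G, ∃ s ∈ S, x * s ∈ P) (hleaves : ∀ x : G, ∃ s ∈ S, x * s ∉ P) :
    Finite (G ⧸ S) := by
  obtain ⟨B, hB⟩ := (Subgroup.fg_iff_submonoid_fg S).mp hS
  have memS {s : G} : s ∈ Submonoid.closure (B : Set G) ↔ s ∈ S := by
    rw [hB, Subgroup.mem_toSubmonoid]
  have hfin : (⋃ b ∈ B, {x ∈ P | x * b ∉ P}).Finite := B.finite_toSet.biUnion fun b _ ↦ hP b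
  refine Set.finite_univ_iff.mp ((hfin.image (QuotientGroup.mk : G → G ⧸ S)).subset ?_)
  rintro ⟨x⟩ -
  obtain ⟨s, hs, hxs⟩ := hmeets x
  obtain ⟨s', hs', hxs'⟩ := hleaves x
  obtain ⟨r, hr, b, hb, hin, hout⟩ := exists_mem_mul_notMem_of_mem_closure
    (memS.mpr (S.mul_mem (S.inv_mem hs) hs')) (x * s) hxs (by simpa [mul_assoc] using hxs')
  refine ⟨x * s * r, Set.mem_biUnion hb ⟨hin, hout⟩, ?_⟩
  rw [mul_assoc]
  exact QuotientGroup.mk_mul_of_mem x (S.mul_mem hs (memS.mp hr))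

end AlmostInvariant

section TwoByTwo

open scoped MatrixGroups

lemma exists_apply_ne_zero {n R : Type*} [Fintype n] [DecidableEq n] [CommRing R] [Nontrivial R]
    (g : GL n R) (i : n) : ∃ j, g i j ≠ 0 := by
  by_contra! h
  exact g.det_ne_zero (Matrix.det_eq_zero_of_row_eq_zero i h)

lemma exists_mulVec_eq_self_of_mul_self_eq_one {n R : Type*} [Fintype n] [DecidableEq n]
    [Ring R] {M : Matrix n n R} (hM : M * M = 1) (hne : M ≠ -1) :
    ∃ v : n → R, v ≠ 0 ∧ M *ᵥ v = v := by
  have : M + 1 ≠ 0 := fun h ↦ hne (eq_neg_of_add_eq_zero_left h)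
  obtain ⟨j, hj⟩ : ∃ j, (M + 1).col j ≠ 0 := by
    by_contra! h
    exact this (Matrix.ext_col h)
  refine ⟨(M + 1).col j, hj, ?_⟩
  rw [← Matrix.mulVec_single_one, Matrix.mulVec_mulVec, mul_add, hM, mul_one, add_comm]

lemma exists_eq_smul_isCoprime {R : Type*} [CommRing R] [IsDomain R] [IsBezout R]
    (v : Fin 2 → R) : ∃ (d : R) (w : Fin 2 → R), v = d • w ∧ IsCoprime (w 0) (w 1) := by
  classical
  let := IsBezout.toGCDDomain R
  obtain ⟨a, c, ha, hc, hac⟩ := extract_gcd (v 0) (v 1)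
  refine ⟨gcd (v 0) (v 1), ![a, c], ?_, gcd_isUnit_iff a c |>.mp hac⟩
  ext i
  fin_cases i
  · exact ha
  · exact hc

/-- The subgroup of upper triangular matrices in `GL(2, R)`. -/
def upperTriangular (R : Type*) [CommRing R] : Subgroup (GL (Fin 2) R) where
  carrier := {g | g 1 0 = 0}
  one_mem' := by simp
  mul_mem' {g h} hg hh := by
    simp_all [Matrix.mul_apply, Fin.sum_univ_two]
  inv_mem' {g} hg := by
    simp_all [Matrix.coe_units_inv, Matrix.inv_def, Matrix.adjugate_fin_two]

lemma mem_upperTriangular {R : Type*} [CommRing R] {g : GL (Fin 2) R} :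
    g ∈ upperTriangular R ↔ g 1 0 = 0 := Iff.rfl

lemma isUnit_diag_of_mem_upperTriangular {R : Type*} [CommRing R] {u : GL (Fin 2) R}
    (hu : u ∈ upperTriangular R) : IsUnit (u 0 0) ∧ IsUnit (u 1 1) := by
  have hdet := u.det.isUnit
  rwa [Matrix.GeneralLinearGroup.val_det_apply, Matrix.det_fin_two, mem_upperTriangular.mp hu,
    mul_zero, sub_zero, IsUnit.mul_iff] at hdet

lemma col_zero_mul_of_mem_upperTriangular {R : Type*} [CommRing R] (g : GL (Fin 2) R)
    {u : GL (Fin 2) R} (hu : u ∈ upperTriangular R) : (g * u).1.col 0 = u 0 0 • g.1.col 0 := by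
  ext i
  simp [Matrix.mul_apply, Fin.sum_univ_two, mem_upperTriangular.mp hu, mul_comm]

lemma inv_mul_mul_mem_upperTriangular {R : Type*} [CommRing R] {g h : GL (Fin 2) R} {μ : R}
    (hg : h.1 *ᵥ g.1.col 0 = μ • g.1.col 0) : g⁻¹ * h * g ∈ upperTriangular R := by
  have hcol : (g⁻¹ * h * g).1.col 0 = μ • Pi.single 0 1 := by
    rw [← Matrix.mulVec_single_one] at hg ⊢
    rw [Units.val_mul, Units.val_mul, ← Matrix.mulVec_mulVec, ← Matrix.mulVec_mulVec, hg,
      Matrix.mulVec_smul, Matrix.mulVec_mulVec, ← Units.val_mul, inv_mul_cancel, Units.val_one,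
      Matrix.one_mulVec]
  simpa [mem_upperTriangular] using congrFun hcol 1

lemma mul_self_ne_neg_one_of_det_eq_neg_one {R : Type*} [CommRing R] [LinearOrder R]
    [IsStrictOrderedRing R] {M : Matrix (Fin 2) (Fin 2) R} (hM : M.det = -1) : M * M ≠ -1 := by
  intro h
  have h00 := congrFun₂ h 0 0
  have h11 := congrFun₂ h 1 1
  rw [Matrix.det_fin_two] at hM
  simp only [Matrix.mul_apply, Fin.sum_univ_two, Matrix.neg_apply, Matrix.one_apply_eq] at h00 h11
  have htrace : (M 0 0 + M 1 1) ^ 2 = -4 := by linear_combination h00 + h11 + 2 * hM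
  linarith [htrace, sq_nonneg (M 0 0 + M 1 1)]

end TwoByTwo

section PGL

open Matrix.GeneralLinearGroup

lemma mem_pmI {g : GL2Z} : g ∈ pmI ↔ g = 1 ∨ g = -1 := by
  rw [pmI, Subgroup.mem_zpowers_iff]
  constructor
  · rintro ⟨k, rfl⟩
    exact k.even_or_odd.imp Even.neg_one_zpow Odd.neg_one_zpow
  · rintro (rfl | rfl)
    · exact ⟨0, zpow_zero _⟩
    · exact ⟨1, zpow_one _⟩

lemma pr_surjective : Function.Surjective pr := QuotientGroup.mk'_surjective pmI

lemma pr_eq_one_iff {g : GL2Z} : pr g = 1 ↔ g = 1 ∨ g = -1 :=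
  (QuotientGroup.eq_one_iff g).trans mem_pmI

lemma pr_eq_pr_iff {g h : GL2Z} : pr g = pr h ↔ g = h ∨ g = -h := by
  rw [eq_comm, ← inv_mul_eq_one, ← map_inv, ← map_mul, pr_eq_one_iff, inv_mul_eq_iff_eq_mul,
    inv_mul_eq_iff_eq_mul, mul_one, mul_neg_one]

lemma pr_neg (g : GL2Z) : pr (-g) = pr g := pr_eq_pr_iff.mpr (.inr rfl)

lemma det_eq_one_of_pr_eq_one {g : GL2Z} (hg : pr g = 1) : det g = 1 := by
  obtain rfl | rfl := pr_eq_one_iff.mp hg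
  · exact map_one _
  · ext
    simp [Matrix.det_neg]

lemma pr_mem_Msub_iff {g : GL2Z} : pr g ∈ Msub ↔ g.det = 1 := by
  constructor
  · rintro ⟨h, hh, hgh⟩
    have : (h⁻¹ * g).det = 1 := det_eq_one_of_pr_eq_one (by rw [map_mul, map_inv, hgh]; simp)
    rwa [map_mul, map_inv, MonoidHom.mem_ker.mp hh, inv_one, one_mul] at this
  · exact fun hg ↦ ⟨g, hg, rfl⟩

lemma mem_Msub_of_odd_of_pow_eq_one {n : ℕ} (hn : Odd n) {x : Mhat} (hx : x ^ n = 1) :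
    x ∈ Msub := by
  obtain ⟨g, rfl⟩ := pr_surjective x
  rw [← map_pow] at hx
  have hdet := det_eq_one_of_pr_eq_one hx
  rw [map_pow, Int.units_pow_eq_pow_mod_two, Nat.odd_iff.mp hn, pow_one] at hdet
  exact pr_mem_Msub_iff.mpr hdet

lemma pr_upperRightHom_mem_That (n : ℤ) : pr (upperRightHom n) ∈ That := by
  have htau : tauGL = upperRightHom 1 := Units.ext rfl
  have hmem : tau ^ n ∈ That := That.zpow_mem (Subgroup.subset_closure (.inl rfl)) n
  rwa [tau, ← map_zpow, htau, ← AddChar.map_zsmul_eq_zpow, zsmul_one, Int.cast_id] at hmem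

lemma pr_mem_That_of_mem_upperTriangular {u : GL2Z} (hu : u ∈ upperTriangular ℤ) :
    pr u ∈ That := by
  have htau (n : ℤ) : pr (upperRightHom n) ∈ That := pr_upperRightHom_mem_That n
  have htaunu (n : ℤ) : pr (upperRightHom n * nuGL) ∈ That :=
    map_mul pr _ _ ▸ That.mul_mem (htau n) (Subgroup.subset_closure (.inr rfl))
  have hform := Matrix.eta_fin_two u.1
  rw [mem_upperTriangular.mp hu] at hform
  obtain ⟨ha, hd⟩ := isUnit_diag_of_mem_upperTriangular hu
  generalize u 0 1 = b at hform
  rcases Int.isUnit_iff.mp ha with ha | ha <;> rcases Int.isUnit_iff.mp hd with hd | hd <;>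
    rw [ha, hd] at hform
  · rw [show u = upperRightHom b from Units.ext hform]
    exact htau b
  · rw [← pr_neg, show -u = upperRightHom (-b) * nuGL from Units.ext (by simp [hform, nuGL])]
    exact htaunu (-b)
  · rw [show u = upperRightHom b * nuGL from Units.ext (by simp [hform, nuGL])]
    exact htaunu b
  · rw [← pr_neg, show -u = upperRightHom (-b) from Units.ext (by simp [hform])]
    exact htau (-b)

lemma That_eq_map_upperTriangular : That = (upperTriangular ℤ).map pr := by
  apply le_antisymm
  · rw [That, Subgroup.closure_le]
    rintro _ (rfl | rfl)
    · exact ⟨tauGL, rfl, rfl⟩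
    · exact ⟨nuGL, rfl, rfl⟩
  · rintro _ ⟨u, hu, rfl⟩
    exact pr_mem_That_of_mem_upperTriangular hu

instance : Infinite That := by
  refine .of_injective
    (fun n : ℤ ↦ (⟨pr (upperRightHom n), pr_upperRightHom_mem_That n⟩ : That)) fun m n hmn ↦ ?_
  obtain h | h := pr_eq_pr_iff.mp (congrArg Subtype.val hmn)
  · exact injective_upperRightHom h
  · have := congrArg (fun g : GL2Z ↦ g 0 0) h
    simp at this

end PGL

section FareyTessellation

open Matrix.GeneralLinearGroup

lemma abs_le_abs_add_of_mul_nonneg {R : Type*} [CommRing R] [LinearOrder R] [IsStrictOrderedRing R]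
    {x y : R} (h : 0 ≤ x * y) : |x| ≤ |x + y| :=
  sq_le_sq.mp (by nlinarith [sq_nonneg y])

lemma abs_apply_le_abs_mul_apply {A B : Matrix (Fin 2) (Fin 2) ℤ} {i j k : Fin 2}
    (hA : A i 0 * A i 1 ≤ 0) (hB : B 0 j * B 1 j ≤ 0) (hne : B k j ≠ 0) :
    |A i k| ≤ |(A * B) i j| := by
  have hsign : 0 ≤ (A i 0 * B 0 j) * (A i 1 * B 1 j) := by
    rw [mul_mul_mul_comm]
    exact mul_nonneg_of_nonpos_of_nonpos hA hB
  have hterm : |A i k * B k j| ≤ |(A * B) i j| := by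
    rw [Matrix.mul_apply, Fin.sum_univ_two]
    fin_cases k
    · exact abs_le_abs_add_of_mul_nonneg hsign
    · rw [add_comm]
      exact abs_le_abs_add_of_mul_nonneg (by rwa [mul_comm])
  calc |A i k| ≤ |A i k| * |B k j| := le_mul_of_one_le_right (abs_nonneg _) (Int.one_le_abs hne)
    _ = |A i k * B k j| := (abs_mul _ _).symm
    _ ≤ |(A * B) i j| := hterm

/-- The elements of `GL(2, ℤ)` moving the edge from `∞` to `0` of the Farey tessellation to an edge
with both endpoints in `[0, ∞]`. Column `j` of `g` represents the endpoint `g 0 j / g 1 j`, whose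
sign is that of the product of its entries. -/
def rightHalf : Set GL2Z := {g | ∀ j, 0 ≤ g 0 j * g 1 j}

/-- The elements of `GL(2, ℤ)` moving the edge from `∞` to `0` of the Farey tessellation to an edge
with both endpoints in `[-∞, 0]`. -/
def leftHalf : Set GL2Z := {g | ∀ j, g 0 j * g 1 j ≤ 0}

lemma mul_nonneg_of_isUnit_sub {x y : ℤ} (h : IsUnit (x - y)) : 0 ≤ x * y := by
  by_contra! hneg
  rcases Int.isUnit_iff.mp h with h | h <;> rcases mul_neg_iff.mp hneg with hxy | hxy <;> lia

lemma mem_rightHalf_or_mem_leftHalf (g : GL2Z) : g ∈ rightHalf ∨ g ∈ leftHalf := by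
  have hdet := (det g).isUnit
  rw [val_det_apply, Matrix.det_fin_two] at hdet
  have hprod : 0 ≤ (g 0 0 * g 1 0) * (g 0 1 * g 1 1) := by
    calc 0 ≤ (g 0 0 * g 1 1) * (g 0 1 * g 1 0) := mul_nonneg_of_isUnit_sub hdet
      _ = (g 0 0 * g 1 0) * (g 0 1 * g 1 1) := by ring
  rcases mul_nonneg_iff.mp hprod with h | h
  · exact .inl (Fin.forall_fin_two.mpr h)
  · exact .inr (Fin.forall_fin_two.mpr h)

lemma neg_mem_rightHalf {g : GL2Z} : -g ∈ rightHalf ↔ g ∈ rightHalf := by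
  simp [rightHalf]

lemma pr_mem_image_rightHalf {g : GL2Z} : pr g ∈ pr '' rightHalf ↔ g ∈ rightHalf := by
  constructor
  · rintro ⟨h, hh, hhg⟩
    rcases pr_eq_pr_iff.mp hhg with rfl | rfl
    · exact hh
    · exact neg_mem_rightHalf.mp hh
  · exact fun hg ↦ ⟨g, hg, rfl⟩

lemma inv_apply_mul_apply_nonpos {g : GL2Z} (hg : g ∈ rightHalf) (i : Fin 2) :
    g⁻¹ i 0 * g⁻¹ i 1 ≤ 0 := by
  have h0 : 0 ≤ g 1 0 * g 0 0 := mul_comm (g 0 0) _ ▸ hg 0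
  have h1 : 0 ≤ g 1 1 * g 0 1 := mul_comm (g 0 1) _ ▸ hg 1
  rw [coe_inv, Matrix.inv_def, Matrix.adjugate_fin_two, ← val_det_apply, Ring.inverse_unit]
  rcases Int.units_eq_one_or (det g) with h | h <;> fin_cases i
  · simpa [h] using h1
  · simpa [h] using h0
  · simpa [h] using h1
  · simpa [h] using h0

lemma exists_forall_abs_apply_le {m n R : Type*} [Finite m] [Finite n] [AddGroup R]
    [LinearOrder R] (A : Matrix m n R) : ∃ N, ∀ i j, |A i j| ≤ N := by
  obtain ⟨N, hN⟩ := (Set.finite_range fun p : m × n ↦ |A p.1 p.2|).bddAbove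
  exact ⟨N, fun i j ↦ hN ⟨(i, j), rfl⟩⟩

lemma finite_setOf_forall_abs_apply_le {m n : Type*} [Finite m] [Finite n] (N : ℤ) :
    {A : Matrix m n ℤ | ∀ i j, |A i j| ≤ N}.Finite := by
  refine Set.Finite.subset (s := {A : m → n → ℤ | ∀ i j, A i j ∈ Set.Icc (-N) N}) ?_
    fun A hA i j ↦ abs_le.mp (hA i j)
  exact Set.Finite.pi' fun _ ↦ Set.Finite.pi' fun _ ↦ Set.finite_Icc _ _

/-- No cancellation occurs in the product of `g⁻¹` and `g * t`, so the entries of `t` bound those of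
`g⁻¹`. -/
lemma finite_rightHalf_mul_mem_leftHalf (t : GL2Z) :
    {g ∈ rightHalf | g * t ∈ leftHalf}.Finite := by
  obtain ⟨N, hN⟩ := exists_forall_abs_apply_le t.1
  refine ((finite_setOf_forall_abs_apply_le N).preimage (f := fun g : GL2Z ↦ (g⁻¹).1)
    (Units.val_injective.comp inv_injective).injOn).subset ?_
  rintro g ⟨hg, hgt⟩ i k
  obtain ⟨j, hj⟩ := exists_apply_ne_zero (g * t) k
  calc |g⁻¹ i k| ≤ |(g⁻¹.1 * (g * t).1) i j| :=
        abs_apply_le_abs_mul_apply (inv_apply_mul_apply_nonpos hg i) (hgt j) hj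
    _ = |t i j| := by rw [← Units.val_mul, inv_mul_cancel_left]
    _ ≤ N := hN i j

lemma isAlmostInvariant_image_rightHalf : IsAlmostInvariant (pr '' rightHalf) := by
  intro x
  obtain ⟨t, rfl⟩ := pr_surjective x
  refine ((finite_rightHalf_mul_mem_leftHalf t).image pr).subset ?_
  rintro _ ⟨⟨g, hg, rfl⟩, hgt⟩
  rw [← map_mul, pr_mem_image_rightHalf] at hgt
  exact ⟨g, ⟨hg, (mem_rightHalf_or_mem_leftHalf _).resolve_left hgt⟩, rfl⟩

end FareyTessellation

section Neumann

open Matrix.GeneralLinearGroup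

variable {S : Subgroup Mhat}

lemma IsNeumann.isComplement' (hS : IsNeumann S) : S.IsComplement' That :=
  Subgroup.isComplement'_of_disjoint_and_mul_eq_univ (disjoint_iff.mpr hS.2) hS.1

lemma IsNeumann.exists_col_eq (hS : IsNeumann S) (x : Mhat) {v : Fin 2 → ℤ}
    (hv : IsCoprime (v 0) (v 1)) : ∃ s ∈ S, ∃ g, pr g = x * s ∧ g.1.col 0 = v := by
  obtain ⟨A, hA0, hA1⟩ := hv.exists_SL2_col 0
  have hA : A.toGL.1.col 0 = v := funext (Fin.forall_fin_two.mpr ⟨hA0, hA1⟩)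
  obtain ⟨⟨⟨s, hs⟩, ⟨t, ht⟩⟩, hst⟩ := hS.isComplement'.surjective (x⁻¹ * pr A)
  rw [That_eq_map_upperTriangular] at ht
  obtain ⟨u, hu, rfl⟩ := ht
  have hpr : pr (A * u⁻¹) = x * s := by
    rw [map_mul, map_inv, mul_inv_eq_iff_eq_mul, mul_assoc, ← inv_mul_eq_iff_eq_mul]
    exact hst.symm
  have hu' := inv_mem hu
  have hcol := col_zero_mul_of_mem_upperTriangular A.toGL hu'
  rw [hA] at hcol
  rcases Int.isUnit_iff.mp (isUnit_diag_of_mem_upperTriangular hu').1 with h | h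
  · exact ⟨s, hs, A * u⁻¹, hpr, by rw [hcol, h, one_smul]⟩
  · refine ⟨s, hs, -(A * u⁻¹), (pr_neg _).trans hpr, ?_⟩
    rw [← neg_neg v, ← neg_one_smul ℤ v, ← h, ← hcol]
    rfl

theorem IsNeumann.not_fg (hS : IsNeumann S) : ¬ S.FG := by
  intro hfg
  have hmeets (x : Mhat) : ∃ s ∈ S, x * s ∈ pr '' rightHalf := by
    obtain ⟨s, hs, g, hg, hcol⟩ := hS.exists_col_eq x (v := ![1, 1]) isCoprime_one_left
    have h0 : g 0 0 = 1 := congrFun hcol 0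
    have h1 : g 1 0 = 1 := congrFun hcol 1
    have hleft : g ∉ leftHalf := fun h ↦ by simpa [h0, h1] using h 0
    exact ⟨s, hs, g, (mem_rightHalf_or_mem_leftHalf g).resolve_right hleft, hg⟩
  have hleaves (x : Mhat) : ∃ s ∈ S, x * s ∉ pr '' rightHalf := by
    obtain ⟨s, hs, g, hg, hcol⟩ := hS.exists_col_eq x (v := ![1, -1]) isCoprime_one_left
    have h0 : g 0 0 = 1 := congrFun hcol 0
    have h1 : g 1 0 = -1 := congrFun hcol 1
    have hright : g ∉ rightHalf := fun h ↦ by simpa [h0, h1] using h 0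
    exact ⟨s, hs, by rwa [← hg, pr_mem_image_rightHalf]⟩
  have := isAlmostInvariant_image_rightHalf.finite_quotient hfg hmeets hleaves
  have hindex : S.index = 0 := by
    rw [hS.isComplement'.symm.index_eq_card, Nat.card_eq_zero_of_infinite]
  exact S.index_ne_zero_of_finite hindex

lemma IsNeumann.pr_eq_one_of_mulVec_eq_smul (hS : IsNeumann S) {h : GL2Z} (hh : pr h ∈ S)
    {v : Fin 2 → ℤ} (hv : v ≠ 0) {μ : ℤ} (heig : h.1 *ᵥ v = μ • v) : pr h = 1 := by
  obtain ⟨d, w, rfl, hw⟩ := exists_eq_smul_isCoprime v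
  have hd : d ≠ 0 := fun hd ↦ hv (by rw [hd, zero_smul])
  rw [Matrix.mulVec_smul, smul_comm] at heig
  obtain ⟨s, hs, g, hg, rfl⟩ := hS.exists_col_eq 1 hw
  rw [one_mul] at hg
  refine eq_one_of_inv_mul_mul_mem_of_isComplement' hS.isComplement' hh (hg ▸ hs) ?_
  rw [← map_inv, ← map_mul, ← map_mul]
  exact pr_mem_That_of_mem_upperTriangular
    (inv_mul_mul_mem_upperTriangular (smul_right_injective _ hd heig))

lemma IsNeumann.mem_Msub_of_sq_eq_one (hS : IsNeumann S) {x : Mhat} (hx : x ∈ S)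
    (hsq : x ^ 2 = 1) : x ∈ Msub := by
  obtain ⟨g, rfl⟩ := pr_surjective x
  rw [pr_mem_Msub_iff]
  by_contra hdet
  have hdet' : g.1.det = -1 :=
    congrArg Units.val ((Int.units_eq_one_or (det g)).resolve_left hdet)
  have hgg : g.1 * g.1 = 1 := by
    rw [← map_pow, pr_eq_one_iff, sq] at hsq
    have hne := mul_self_ne_neg_one_of_det_eq_neg_one hdet'
    exact congrArg Units.val (hsq.resolve_right fun h ↦ hne (congrArg Units.val h))
  have hne : g.1 ≠ -1 := by
    intro h
    simp [h, Matrix.det_neg] at hdet'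
  obtain ⟨v, hv, hgv⟩ := exists_mulVec_eq_self_of_mul_self_eq_one hgg hne
  exact hdet (det_eq_one_of_pr_eq_one
    (hS.pr_eq_one_of_mulVec_eq_smul hx hv (hgv.trans (one_smul ℤ v).symm)))

end Neumann

section FreeProduct

lemma pow_eq_one_of_mulEquiv_zmod {G : Type*} [Group G] {n : ℕ} (f : G ≃* Multiplicative (ZMod n))
    (x : G) : x ^ n = 1 := by
  have hcard : Nat.card G = n := by
    rw [Nat.card_congr (f.toEquiv.trans Multiplicative.toAdd), Nat.card_zmod]
  rw [← hcard, pow_card_eq_one']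

lemma iSup_range_comp_of_eq_top {ι G : Type*} [Group G] {H : ι → Type*} [∀ i, Group (H i)]
    (e : G ≃* Monoid.CoprodI H) :
    ⨆ i, (e.symm.toMonoidHom.comp (Monoid.CoprodI.of (i := i))).range = ⊤ := by
  have hlift : Monoid.CoprodI.lift (fun i ↦ e.symm.toMonoidHom.comp Monoid.CoprodI.of) =
      e.symm.toMonoidHom := Monoid.CoprodI.lift_comp_of' _
  rw [← Monoid.CoprodI.range_eq_iSup, hlift]
  exact MonoidHom.range_eq_top.mpr e.symm.surjective

variable {G : Type} [Group G] {k l m : ℕ∞}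

lemma HasKLMStructure.fg (hG : HasKLMStructure G k l m) (hklm : k + l + m ≠ ⊤) : Group.FG G := by
  obtain ⟨ι, H, inst, ⟨e⟩, hcyc, rfl, rfl, rfl⟩ := hG
  simp only [ne_eq, ENat.add_eq_top, not_or, Set.encard_eq_top_iff, Set.not_infinite] at hklm
  have hfin : Finite ι :=
    Set.finite_univ_iff.mp (((hklm.1.1.union hklm.1.2).union hklm.2).subset fun i _ ↦
      or_assoc.mpr (hcyc i))
  have hfg (i : ι) : Group.FG (H i) := by
    rcases hcyc i with ⟨⟨f⟩⟩ | ⟨⟨f⟩⟩ | ⟨⟨f⟩⟩ <;>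
      exact Group.fg_of_surjective (f := f.symm.toMonoidHom) f.symm.surjective
  rw [Group.fg_def, ← iSup_range_comp_of_eq_top e]
  exact Subgroup.FG.iSup _ fun i ↦ (Group.fg_iff_subgroup_fg _).mp (Group.fg_range _)

lemma HasKLMStructure.closure_eq_top (hG : HasKLMStructure G k l 0) :
    Subgroup.closure {x : G | x ^ 2 = 1 ∨ x ^ 3 = 1} = ⊤ := by
  obtain ⟨ι, H, inst, ⟨e⟩, hcyc, -, -, hm⟩ := hG
  rw [Set.encard_eq_zero] at hm
  rw [eq_top_iff, ← iSup_range_comp_of_eq_top e, iSup_le_iff]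
  rintro i _ ⟨y, rfl⟩
  apply Subgroup.subset_closure
  rcases hcyc i with ⟨⟨f⟩⟩ | ⟨⟨f⟩⟩ | hf
  · exact .inl (by rw [← map_pow, pow_eq_one_of_mulEquiv_zmod f, map_one])
  · exact .inr (by rw [← map_pow, pow_eq_one_of_mulEquiv_zmod f, map_one])
  · exact absurd hf (Set.eq_empty_iff_forall_notMem.mp hm i)

end FreeProduct

/-- If Ŝ is a Neumann subgroup of M̂ = PGL(2,ℤ) not contained
in M = PSL(2,ℤ) and Ŝ has (k,l,m)-structure, then k + l + m = ∞ and m ≥ 1. -/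
theorem neumann_klm_structure_constraints
    (Shat : Subgroup Mhat) (h1 : IsNeumann Shat) (h2 : ¬ Shat ≤ Msub)
    (k l m : ℕ∞) (h3 : HasKLMStructure Shat k l m) :
    k + l + m = ⊤ ∧ 1 ≤ m := by
  constructor
  · by_contra hklm
    exact h1.not_fg ((Group.fg_iff_subgroup_fg Shat).mp (h3.fg hklm))
  · rw [Order.one_le_iff_ne_zero]
    rintro rfl
    have htop : Msub.subgroupOf Shat = ⊤ := by
      rw [eq_top_iff, ← h3.closure_eq_top, Subgroup.closure_le]
      rintro x (hx | hx)
      · exact h1.mem_Msub_of_sq_eq_one x.2 (congrArg Subtype.val hx)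
      · exact mem_Msub_of_odd_of_pow_eq_one (by decide) (congrArg Subtype.val hx)
    exact h2 (Subgroup.subgroupOf_eq_top.mp htop)
end
end

section
/- Let Ω be a set partitioned into two countably infinite subsets Ω₀ and Ω₁, and let Φ : M̂ → Sym(Ω) be a group homomorphism such that Φ(τ) maps each of Ω₀ and Ω₁ onto itself and acts transitively on each of them, and Φ(ν) maps Ω₀ onto Ω₁. Then for every p ∈ Ω the stabilizer Ŝ = {g ∈ M̂ : Φ(g)(p) = p} is a Neumann subgroup of M̂; moreover, the stabilizers obtained from different choices of p ∈ Ω are conjugate subgroups of M̂. -/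
open Matrix Pointwise

noncomputable section

/-!
`Φ τ` acts on each of the two sheets as a translation of `ℤ`, and `Φ ν` exchanges the sheets, so
`T̂ = {τⁿ} ∪ {τⁿν}` acts simply transitively on `Ω`. A subgroup acting simply transitively is a
complement of every point stabilizer, and stabilizers in a transitive action are conjugate.
-/

theorem eq_zpow_or_eq_zpow_mul_of_mem_closure_pair {G : Type*} [Group G] {t v : G}
    (hv : v * v = 1) (hvt : SemiconjBy v t t⁻¹) {g : G} (hg : g ∈ Subgroup.closure {t, v}) :
    ∃ n : ℤ, g = t ^ n ∨ g = t ^ n * v := by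
  have hv_inv : v⁻¹ = v := inv_eq_of_mul_eq_one_left hv
  have hvt_inv : v * t⁻¹ = t * v := by simpa only [inv_inv] using hvt.inv_right.eq
  induction hg using Subgroup.closure_induction_right with
  | one => exact ⟨0, .inl (zpow_zero t).symm⟩
  | mul_right g _ s hs ih =>
    obtain ⟨n, rfl | rfl⟩ := ih <;> obtain rfl | rfl := hs
    · exact ⟨n + 1, .inl (zpow_add_one s n).symm⟩
    · exact ⟨n, .inr rfl⟩
    · exact ⟨n - 1, .inr (by rw [mul_assoc, hvt.eq, ← mul_assoc, _root_.zpow_sub_one])⟩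
    · exact ⟨n, .inl (by rw [mul_assoc, hv, mul_one])⟩
  | mul_inv_cancel g _ s hs ih =>
    obtain ⟨n, rfl | rfl⟩ := ih <;> obtain rfl | rfl := hs
    · exact ⟨n - 1, .inl (zpow_sub_one s n).symm⟩
    · exact ⟨n, .inr (by rw [hv_inv])⟩
    · exact ⟨n + 1, .inr (by rw [mul_assoc, hvt_inv, ← mul_assoc, _root_.zpow_add_one])⟩
    · exact ⟨n, .inl (mul_inv_cancel_right _ _)⟩

section MulAction

open MulAction
open Subgroup (zpowers closure)

variable {G α : Type*} [Group G] [MulAction G α] {t v : G} {x : α}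

theorem zpow_smul_eq_self_iff_of_infinite_orbit (hx : (orbit (zpowers t) x).Infinite) {n : ℤ} :
    t ^ n • x = x ↔ n = 0 := by
  have hperiod : Function.minimalPeriod (t • ·) x = 0 := by
    by_contra hne
    have : NeZero (Function.minimalPeriod (t • ·) x) := ⟨hne⟩
    exact hx (Set.finite_coe_iff.mp (Finite.of_equiv _ (orbitZPowersEquiv t x).symm))
  rw [zpow_smul_eq_iff_minimalPeriod_dvd, hperiod, Nat.cast_zero, zero_dvd_iff]

theorem orbit_zpowers_eq_of_smul_set_eq {A : Set α} (hA : t • A = A)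
    (htrans : ∀ x ∈ A, ∀ y ∈ A, ∃ n : ℤ, t ^ n • x = y) (hx : x ∈ A) :
    orbit (zpowers t) x = A := by
  have hstab : zpowers t ≤ stabilizer G A := Subgroup.zpowers_le.mpr hA
  refine Set.Subset.antisymm ?_ fun y hy => ?_
  · rintro _ ⟨⟨g, hg⟩, rfl⟩
    exact (mem_stabilizer_iff.mp (hstab hg)).subset (Set.smul_mem_smul_set hx)
  · obtain ⟨n, rfl⟩ := htrans x hx y hy
    exact mem_orbit x (⟨t ^ n, Subgroup.zpow_mem_zpowers t n⟩ : zpowers t)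

theorem eq_one_of_mem_closure_pair_of_smul_eq_self (hv : v * v = 1) (hvt : SemiconjBy v t t⁻¹)
    (hinf : (orbit (zpowers t) x).Infinite)
    (hdisj : Disjoint (orbit (zpowers t) x) (orbit (zpowers t) (v • x)))
    {g : G} (hg : g ∈ closure {t, v}) (hgx : g • x = x) : g = 1 := by
  obtain ⟨n, rfl | rfl⟩ := eq_zpow_or_eq_zpow_mul_of_mem_closure_pair hv hvt hg
  · rw [(zpow_smul_eq_self_iff_of_infinite_orbit hinf).mp hgx, zpow_zero]
  · have hmem : x ∈ orbit (zpowers t) (v • x) :=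
      ⟨⟨t ^ n, Subgroup.zpow_mem_zpowers t n⟩, (mul_smul _ _ _).symm.trans hgx⟩
    exact absurd hmem (Set.disjoint_left.mp hdisj (mem_orbit_self x))

theorem exists_mem_closure_pair_smul_eq
    (hcover : Codisjoint (orbit (zpowers t) x) (orbit (zpowers t) (v • x))) (y : α) :
    ∃ g ∈ closure {t, v}, g • x = y := by
  have hle : zpowers t ≤ closure {t, v} :=
    Subgroup.zpowers_le.mpr (Subgroup.subset_closure (Set.mem_insert t {v}))
  have hv : v ∈ closure {t, v} := Subgroup.subset_closure (Set.mem_insert_of_mem t rfl)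
  rcases hcover.top_le (Set.mem_univ y) with ⟨⟨g, hg⟩, rfl⟩ | ⟨⟨g, hg⟩, rfl⟩
  · exact ⟨g, hle hg, rfl⟩
  · exact ⟨g * v, mul_mem (hle hg) hv, mul_smul g v x⟩

theorem isComplement'_stabilizer_closure_pair (hv : v * v = 1) (hvt : SemiconjBy v t t⁻¹)
    (hinf : (orbit (zpowers t) x).Infinite)
    (hcompl : IsCompl (orbit (zpowers t) x) (orbit (zpowers t) (v • x))) :
    (stabilizer G x).IsComplement' (closure {t, v}) := by
  refine (Subgroup.isComplement'_stabilizer x (fun h hx => ?_) fun g => ?_).symm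
  · exact Subtype.ext
      (eq_one_of_mem_closure_pair_of_smul_eq_self hv hvt hinf hcompl.disjoint h.2 hx)
  · obtain ⟨h, hh, hx⟩ := exists_mem_closure_pair_smul_eq hcompl.codisjoint (g • x)
    exact ⟨⟨h, hh⟩⁻¹, inv_smul_eq_iff.mpr hx.symm⟩

end MulAction

theorem isNeumann_iff_isComplement' {S : Subgroup Mhat} :
    IsNeumann S ↔ S.IsComplement' That := by
  rw [IsNeumann, ← disjoint_iff]
  exact ⟨fun h => Subgroup.isComplement'_of_disjoint_and_mul_eq_univ h.2 h.1,
    fun h => ⟨h.mul_eq, h.disjoint⟩⟩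

theorem nu_mul_nu : nu * nu = 1 := by
  have h : nuGL * nuGL = 1 := Units.ext (by decide)
  rw [nu, ← map_mul, h, map_one]

theorem semiconjBy_nu_tau : SemiconjBy nu tau tau⁻¹ := by
  have h : tauGL * (nuGL * tauGL) = nuGL := Units.ext (by decide)
  rw [SemiconjBy, eq_inv_mul_iff_mul_eq, nu, tau, ← map_mul, ← map_mul, h]

/-- Given a partition Ω = Ω₀ ∪ Ω₁ into countably infinite
sets and a homomorphism Φ : M̂ → Sym(Ω) such that Φ(τ) preserves Ω₀ and Ω₁ and
acts transitively on each of them, while Φ(ν) maps Ω₀ onto Ω₁, every point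
stabilizer {g : Φ(g)(p) = p} is a Neumann subgroup of M̂; moreover stabilizers
of different points are conjugate. -/
theorem stabilizer_of_semitransitive_quadruple_isNeumann
    (Ω : Type) (Ω₀ Ω₁ : Set Ω)
    (hdisj : Disjoint Ω₀ Ω₁) (hcover : Ω₀ ∪ Ω₁ = Set.univ)
    (hc0 : Ω₀.Countable) (hi0 : Ω₀.Infinite)
    (hc1 : Ω₁.Countable) (hi1 : Ω₁.Infinite)
    (Φ : Mhat →* Equiv.Perm Ω)
    (h0 : ⇑(Φ tau) '' Ω₀ = Ω₀) (h1 : ⇑(Φ tau) '' Ω₁ = Ω₁)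
    (ht0 : ∀ x ∈ Ω₀, ∀ y ∈ Ω₀, ∃ n : ℤ, (Φ tau ^ n) x = y)
    (ht1 : ∀ x ∈ Ω₁, ∀ y ∈ Ω₁, ∃ n : ℤ, (Φ tau ^ n) x = y)
    (hv : ⇑(Φ nu) '' Ω₀ = Ω₁) :
    (∀ p : Ω, IsNeumann ((MulAction.stabilizer (Equiv.Perm Ω) p).comap Φ)) ∧
    ∀ p q : Ω, ∃ g : Mhat,
      Subgroup.map (MulAut.conj g).toMonoidHom
          ((MulAction.stabilizer (Equiv.Perm Ω) p).comap Φ) =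
        (MulAction.stabilizer (Equiv.Perm Ω) q).comap Φ := by
  let : MulAction Mhat Ω := MulAction.compHom Ω Φ
  simp only [← map_zpow] at ht0 ht1
  have hpart : IsCompl Ω₀ Ω₁ := ⟨hdisj, codisjoint_iff.mpr hcover⟩
  replace hv : nu • Ω₀ = Ω₁ := hv
  have hv' : nu • Ω₁ = Ω₀ := by rw [← hv, smul_smul, nu_mul_nu, one_smul]
  have orbit₀ {x} (hx : x ∈ Ω₀) : MulAction.orbit (Subgroup.zpowers tau) x = Ω₀ :=
    orbit_zpowers_eq_of_smul_set_eq h0 ht0 hx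
  have orbit₁ {x} (hx : x ∈ Ω₁) : MulAction.orbit (Subgroup.zpowers tau) x = Ω₁ :=
    orbit_zpowers_eq_of_smul_set_eq h1 ht1 hx
  have horbit (x : Ω) : (MulAction.orbit (Subgroup.zpowers tau) x).Infinite ∧
      IsCompl (MulAction.orbit (Subgroup.zpowers tau) x)
        (MulAction.orbit (Subgroup.zpowers tau) (nu • x)) := by
    rcases hcover.ge (Set.mem_univ x) with hx | hx
    · rw [orbit₀ hx, orbit₁ (hv.subset (Set.smul_mem_smul_set hx))]
      exact ⟨hi0, hpart⟩
    · rw [orbit₁ hx, orbit₀ (hv'.subset (Set.smul_mem_smul_set hx))]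
      exact ⟨hi1, hpart.symm⟩
  refine ⟨fun p => isNeumann_iff_isComplement'.mpr (isComplement'_stabilizer_closure_pair
    nu_mul_nu semiconjBy_nu_tau (horbit p).1 (horbit p).2), fun p q => ?_⟩
  obtain ⟨g, -, rfl⟩ := exists_mem_closure_pair_smul_eq (horbit p).2.codisjoint q
  exact ⟨g, (MulAction.stabilizer_smul_eq_stabilizer_map_conj g p).symm⟩
end
end
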